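/- Let ρ : ℕ → ℝ be positive and nonincreasing with liminf_{N→∞} ρ(2N)/ρ(N) = γ₋ > 0 and limsup_{N→∞} ρ(2N)/ρ(N) = γ₊ < 1. Let S : ℕ → ℝ be positive and nondecreasing with liminf_{N→∞} S(2N)/S(N) = Γ₋ > 1. Define τ̄(N,n) = (ρ(N) - ρ(2N)) + σ²·(S(2N) - S(N))/n and A(N,n) = ρ(N) + σ²·S(N)/n for fixed σ > 0. Then there exists N₀ such that for all N ≥ N₀ and all n ≥ 1, τ̄(N,n) ≥ U·A(N,n), where U = min(1 - γ₊, Γ₋ - 1) (taking any U' < U if needed for strictness). -/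

import Mathlib

open Filter

/-- Key comparison for Theorem 1: for every `ε > 0` there is `N₀` such that for
`N ≥ N₀` and all `n ≥ 1`, the expected criterion
`τ̄(N,n) = (ρ(N) - ρ(2N)) + σ²(S(2N) - S(N))/n` dominates
`(min(1-γ₊, Γ₋-1) - ε) · A(N,n)`, where `A(N,n) = ρ(N) + σ² S(N)/n`. -/
theorem stmt3 (ρ S : ℕ → ℝ) (σ γm γp Γm : ℝ) (hσ : 0 < σ)
    (hρpos : ∀ N, 0 < ρ N) (hρmono : ∀ N, ρ (N + 1) ≤ ρ N)
    (hSpos : ∀ N, 0 < S N) (hSmono : ∀ N, S N ≤ S (N + 1))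
    (hγm : Filter.liminf (fun N : ℕ => ρ (2 * N) / ρ N) atTop = γm) (hγmpos : 0 < γm)
    (hγp : Filter.limsup (fun N : ℕ => ρ (2 * N) / ρ N) atTop = γp) (hγp1 : γp < 1)
    (hΓm : Filter.liminf (fun N : ℕ => S (2 * N) / S N) atTop = Γm) (hΓm1 : 1 < Γm)
    (τbar A : ℕ → ℕ → ℝ)
    (hτ : ∀ N n, τbar N n = (ρ N - ρ (2 * N)) + σ ^ 2 * (S (2 * N) - S N) / (n : ℝ))
    (hA : ∀ N n, A N n = ρ N + σ ^ 2 * S N / (n : ℝ)) :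
    ∀ ε : ℝ, 0 < ε → ∃ N₀ : ℕ, ∀ N : ℕ, N₀ ≤ N → ∀ n : ℕ, 1 ≤ n →
      (min (1 - γp) (Γm - 1) - ε) * A N n ≤ τbar N n := by
  intro ε hε
  have hanti : Antitone ρ := antitone_nat_of_succ_le hρmono
  have h1 : ∀ᶠ N : ℕ in atTop, ρ (2 * N) / ρ N < γp + ε := by
    apply eventually_lt_of_limsup_lt
    · rw [hγp]; linarith
    · refine isBoundedUnder_of ⟨1, fun N => ?_⟩
      rw [div_le_one (hρpos N)]
      exact hanti (by omega)
  have h2 : ∀ᶠ N : ℕ in atTop, Γm - ε < S (2 * N) / S N := by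
    apply eventually_lt_of_lt_liminf
    · rw [hΓm]; linarith
    · refine isBoundedUnder_of ⟨0, fun N => ?_⟩
      exact (div_pos (hSpos _) (hSpos _)).le
  obtain ⟨N₀, hN₀⟩ := eventually_atTop.1 (h1.and h2)
  refine ⟨N₀, fun N hN n hn => ?_⟩
  obtain ⟨ha, hb⟩ := hN₀ N hN
  rw [div_lt_iff₀ (hρpos N)] at ha
  rw [lt_div_iff₀ (hSpos N)] at hb
  have hn' : (0 : ℝ) < n := by exact_mod_cast hn
  have hc : 0 < σ ^ 2 / (n : ℝ) := by positivity
  have e1 : (min (1 - γp) (Γm - 1) - ε) * ρ N ≤ ρ N - ρ (2 * N) := by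
    have := mul_le_mul_of_nonneg_right (min_le_left (1 - γp) (Γm - 1)) (hρpos N).le
    nlinarith
  have e2 : (min (1 - γp) (Γm - 1) - ε) * S N ≤ S (2 * N) - S N := by
    have := mul_le_mul_of_nonneg_right (min_le_right (1 - γp) (Γm - 1)) (hSpos N).le
    nlinarith
  have e3 := mul_le_mul_of_nonneg_left e2 hc.le
  rw [hτ, hA]
  calc _ = (min (1 - γp) (Γm - 1) - ε) * ρ N
        + σ ^ 2 / (n : ℝ) * ((min (1 - γp) (Γm - 1) - ε) * S N) := by ring
    _ ≤ (ρ N - ρ (2 * N)) + σ ^ 2 / (n : ℝ) * (S (2 * N) - S N) := add_le_add e1 e3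
    _ = _ := by ring
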